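/- arXiv:1505.00459 — 2 statements merged into one kernel-verified Lean document; each statement's English description precedes it below -/
import Mathlib

section
/- Let ‖·‖ be a norm on ℝ² whose unit sphere S = {x ∈ ℝ² : ‖x‖ = 1} contains no line segment [c, d] with c, d ∈ S and ‖c − d‖ > 1. Then every map φ : ℝ² → ℝ² satisfying ‖φ(x) − φ(y)‖ = 1 whenever ‖x − y‖ = 1 is an affine isometry. -/
/-- `N` is a norm on `ℝ²`. -/
structure IsNorm (N : ℝ × ℝ → ℝ) : Prop where
  add_le : ∀ x y : ℝ × ℝ, N (x + y) ≤ N x + N y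
  smul_eq : ∀ (c : ℝ) (x : ℝ × ℝ), N (c • x) = |c| * N x
  eq_zero_of : ∀ x : ℝ × ℝ, N x = 0 → x = 0

/-- `N` is a URTC-norm: for every `a b` at `N`-distance `1`, there are exactly two
points `x` with `N (a - x) = 1` and `N (b - x) = 1`. -/
def IsURTC (N : ℝ × ℝ → ℝ) : Prop :=
  ∀ a b : ℝ × ℝ, N (a - b) = 1 →
    {x : ℝ × ℝ | N (a - x) = 1 ∧ N (b - x) = 1}.encard = 2

/-!
In a plane whose unit sphere contains no segment longer than one, each segment of length one is a
side of exactly two equilateral triangles, and these form a rhombus whose long diagonal exceeds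
one. So a unit-distance preserving map `φ` sends a unit rhombus `x, x + u, x + v, x + u + v`, made
of two equilateral triangles, either to such a rhombus or to a folded one, whose opposite vertices
`φ x` and `φ (x + u + v)` coincide. The positively oriented equilateral triangles with vertex `x`
form a connected set, so turning the rhombus halfway about `x` one meets a position in which its
vertex opposite to `x` has moved by distance one. If the initial rhombus were folded, the image of
the moved vertex would be at distance one from `φ x`; but that distance is `0` for a folded
rhombus and exceeds one for an unfolded one.

Hence `φ` satisfies the parallelogram law on unit rhombi. Gluing two of them along a side shows
that `φ` maps `x, x + e, x + 2e, …` to an arithmetic progression for every unit vector `e`, and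
two such progressions which stay at distance one have the same step. Thus the parallelogram law
holds for all pairs of unit vectors, which generate the plane additively, so `φ - φ 0` is
additive.
-/

open Set Metric Module

section Convexity

lemma eq_of_convexOn_of_le_of_eq_translate {k : ℝ → ℝ} (hk : ConvexOn ℝ univ k) {a b d r : ℝ}
    (hd : 0 < d) (ha : k a ≤ r) (had : k (a + d) ≤ r) (hb : k b = r) (hbd : k (b + d) = r) :
    k a = r ∧ k (a + d) = r := by
  have right {x y z : ℝ} (hxy : x < y) (hyz : y ≤ z) (hx : k x ≤ r) (hy : k y = r) : r ≤ k z :=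
    hy ▸ hk.le_right_of_left_le'' (mem_univ x) (mem_univ z) hxy hyz (hx.trans hy.ge)
  have left {x y z : ℝ} (hxy : x ≤ y) (hyz : y < z) (hz : k z ≤ r) (hy : k y = r) : r ≤ k x :=
    hy ▸ hk.le_left_of_right_le'' (mem_univ x) (mem_univ z) hxy hyz (hz.trans hy.ge)
  suffices r ≤ k a ∧ r ≤ k (a + d) from ⟨ha.antisymm this.1, had.antisymm this.2⟩
  rcases lt_trichotomy a b with hab | rfl | hba
  · refine ⟨left hab.le (lt_add_of_pos_right b hd) hbd.le hb, ?_⟩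
    rcases le_total b (a + d) with h | h
    · exact right hab h ha hb
    · exact left h (lt_add_of_pos_right b hd) hbd.le hb
  · exact ⟨hb.ge, hbd.ge⟩
  · refine ⟨?_, right (lt_add_of_pos_right b hd) (by linarith) hb.le hbd⟩
    rcases le_total a (b + d) with h | h
    · exact left h (by linarith) had hbd
    · exact right (lt_add_of_pos_right b hd) h hb.le hbd

lemma convexOn_norm_add_smul {E : Type*} [SeminormedAddCommGroup E] [NormedSpace ℝ E] (x e : E) :
    ConvexOn ℝ univ fun s : ℝ ↦ ‖x + s • e‖ := by
  simpa [Function.comp_def, AffineMap.lineMap_apply, add_comm] using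
    convexOn_univ_norm.comp_affineMap (AffineMap.lineMap (k := ℝ) x (x + e))

end Convexity

section Connectedness

lemma isPreconnected_of_isPreconnected_image_of_fibers {X Y : Type*} [TopologicalSpace X]
    [TopologicalSpace Y] [T2Space Y] {K : Set X} {f : X → Y} (hK : IsCompact K)
    (hf : ContinuousOn f K) (himage : IsPreconnected (f '' K))
    (hfiber : ∀ y ∈ f '' K, IsPreconnected (K ∩ f ⁻¹' {y})) : IsPreconnected K := by
  rw [isPreconnected_closed_iff] at himage ⊢
  intro A B hA hB hAB hKA hKB
  have isClosed_image {C : Set X} (hC : IsClosed C) : IsClosed (f '' (K ∩ C)) :=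
    ((hK.inter_right hC).image_of_continuousOn (hf.mono inter_subset_left)).isClosed
  have hcover : f '' K ⊆ f '' (K ∩ A) ∪ f '' (K ∩ B) := by
    rw [← image_union, ← inter_union_distrib_left, inter_eq_left.2 hAB]
  have hmeets {C : Set X} (hC : (K ∩ C).Nonempty) : (f '' K ∩ f '' (K ∩ C)).Nonempty :=
    (hC.image f).mono (subset_inter (image_mono inter_subset_left) Subset.rfl)
  obtain ⟨y, hy, ⟨x, ⟨hxK, hxA⟩, hxy⟩, ⟨x', ⟨hxK', hxB⟩, hxy'⟩⟩ :=
    himage _ _ (isClosed_image hA) (isClosed_image hB) hcover (hmeets hKA) (hmeets hKB)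
  exact (isPreconnected_closed_iff.1 (hfiber y hy) A B hA hB (inter_subset_left.trans hAB)
    ⟨x, ⟨hxK, hxy⟩, hxA⟩ ⟨x', ⟨hxK', hxy'⟩, hxB⟩).mono
    (inter_subset_inter_left _ inter_subset_left)

end Connectedness

section AlternatingForm

variable {K V : Type*} [Field K] [AddCommGroup V] [Module K V]

lemma exists_isAlt_ne_zero_of_finrank_eq_two (hV : finrank K V = 2) :
    ∃ ω : V →ₗ[K] V →ₗ[K] K, ω.IsAlt ∧ ω ≠ 0 := by
  have : FiniteDimensional K V := .of_finrank_eq_succ hV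
  let b := finBasisOfFinrankEq K V hV
  refine ⟨(b.coord 0).smulRight (b.coord 1) - (b.coord 1).smulRight (b.coord 0),
    fun x ↦ by simp [mul_comm], fun h ↦ ?_⟩
  simpa using LinearMap.congr_fun₂ h (b 0) (b 1)

lemma exists_smul_eq_of_isAlt_of_apply_eq_zero (hV : finrank K V = 2) {ω : V →ₗ[K] V →ₗ[K] K}
    (hω : ω.IsAlt) (hω₀ : ω ≠ 0) {e f : V} (he : e ≠ 0) (h : ω e f = 0) : ∃ t : K, t • e = f := by
  by_contra! hne
  let b := basisOfLinearIndependentOfCardEqFinrank ((LinearIndependent.pair_iff' he).2 hne)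
    (by simp [hV])
  have h' : ω f e = 0 := by rw [← hω.neg, h, neg_zero]
  refine hω₀ (b.ext fun i ↦ b.ext fun j ↦ ?_)
  fin_cases i <;> fin_cases j <;> simp [b, hω.self_eq_zero, h, h']

end AlternatingForm

section UnitVectors

variable {E : Type*} [NormedAddCommGroup E] [NormedSpace ℝ E]

lemma exists_norm_eq_one_and_norm_smul_eq [Nontrivial E] (v : E) :
    ∃ u : E, ‖u‖ = 1 ∧ ‖v‖ • u = v := by
  rcases eq_or_ne v 0 with rfl | hv
  · obtain ⟨u, hu⟩ := exists_norm_eq E zero_le_one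
    exact ⟨u, hu, by simp⟩
  · exact ⟨‖v‖⁻¹ • v, by simp [norm_smul, hv], smul_inv_smul₀ (norm_ne_zero_iff.2 hv) v⟩

lemma exists_norm_eq_one_and_norm_sub_eq_one (hE : 1 < Module.rank ℝ E) {v : E} (hv : ‖v‖ ≤ 2) :
    ∃ u : E, ‖u‖ = 1 ∧ ‖v - u‖ = 1 := by
  have : Nontrivial E := rank_pos_iff_nontrivial.1 (zero_lt_one.trans hE)
  obtain ⟨u₀, hu₀, hvu⟩ := exists_norm_eq_one_and_norm_smul_eq v
  have hnear : ‖v - u₀‖ ≤ 1 := by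
    rw [show v - u₀ = (‖v‖ - 1) • u₀ by rw [sub_smul, hvu, one_smul], norm_smul, hu₀, mul_one,
      Real.norm_eq_abs, abs_le]
    constructor <;> linarith [norm_nonneg v]
  have hfar : 1 ≤ ‖v - -u₀‖ := by
    rw [show v - -u₀ = (‖v‖ + 1) • u₀ by rw [add_smul, hvu, one_smul, sub_neg_eq_add], norm_smul,
      hu₀, mul_one, Real.norm_of_nonneg (by positivity)]
    linarith [norm_nonneg v]
  obtain ⟨u, hu, hvu⟩ := (isPreconnected_sphere hE (0 : E) 1).intermediate_value
    (f := fun u ↦ ‖v - u‖) (by simpa using hu₀) (by simpa using hu₀) (by fun_prop) ⟨hnear, hfar⟩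
  exact ⟨u, by simpa using hu, hvu⟩

lemma addSubmonoid_closure_sphere_eq_top (hE : 1 < Module.rank ℝ E) :
    AddSubmonoid.closure (sphere (0 : E) 1) = ⊤ := by
  refine eq_top_iff.2 fun v _ ↦ ?_
  obtain ⟨n, hn⟩ := exists_nat_gt ‖v‖
  have hn₀ : (0 : ℝ) < n := (norm_nonneg v).trans_lt hn
  have hle : ‖(n : ℝ)⁻¹ • v‖ ≤ 2 := by
    rw [norm_smul, norm_inv, Real.norm_of_nonneg hn₀.le, inv_mul_le_iff₀ hn₀]
    linarith
  obtain ⟨u, hu, hu'⟩ := exists_norm_eq_one_and_norm_sub_eq_one hE hle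
  have hmem : u + ((n : ℝ)⁻¹ • v - u) ∈ AddSubmonoid.closure (sphere (0 : E) 1) :=
    add_mem (AddSubmonoid.subset_closure (by simpa using hu))
      (AddSubmonoid.subset_closure (by simpa using hu'))
  simpa [← Nat.cast_smul_eq_nsmul ℝ, hn₀.ne'] using nsmul_mem hmem n

end UnitVectors

section UnitTriangle

variable {E : Type*} [NormedAddCommGroup E]

/-- The points `0, u, v` are the vertices of an equilateral triangle of side one. Triangles with
another vertex than `0` are described by the two edge vectors at that vertex. -/
structure IsUnitTriangle (u v : E) : Prop where
  norm_left : ‖u‖ = 1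
  norm_right : ‖v‖ = 1
  norm_sub : ‖u - v‖ = 1

namespace IsUnitTriangle

variable {u v e f g : E}

lemma symm (h : IsUnitTriangle u v) : IsUnitTriangle v u :=
  ⟨h.norm_right, h.norm_left, norm_sub_rev u v ▸ h.norm_sub⟩

lemma neg (h : IsUnitTriangle u v) : IsUnitTriangle (-u) (-v) :=
  ⟨(norm_neg u).trans h.norm_left, (norm_neg v).trans h.norm_right, by
    rw [neg_sub_neg, norm_sub_rev, h.norm_sub]⟩

lemma sub_right (h : IsUnitTriangle u v) : IsUnitTriangle u (u - v) :=
  ⟨h.norm_left, h.norm_sub, by rw [sub_sub_cancel, h.norm_right]⟩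

lemma ne_zero_left (h : IsUnitTriangle u v) : u ≠ 0 :=
  norm_ne_zero_iff.1 (by simp [h.norm_left])

variable [NormedSpace ℝ E] {ω : E →ₗ[ℝ] E →ₗ[ℝ] ℝ}

lemma one_le_norm_add (h : IsUnitTriangle u v) : 1 ≤ ‖u + v‖ := by
  have := norm_add_le (u + v) (u - v)
  rw [show u + v + (u - v) = (2 : ℝ) • u by module, norm_smul, h.norm_left, h.norm_sub] at this
  norm_num at this
  linarith

lemma apply_ne_zero (hE : finrank ℝ E = 2) (hω : ω.IsAlt) (hω₀ : ω ≠ 0)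
    (h : IsUnitTriangle e f) : ω e f ≠ 0 := by
  intro h0
  obtain ⟨t, rfl⟩ := exists_smul_eq_of_isAlt_of_apply_eq_zero hE hω hω₀ h.ne_zero_left h0
  have ht : |t| = 1 := by simpa [norm_smul, h.norm_left] using h.norm_right
  have ht' : |1 - t| = 1 := by
    simpa [norm_smul, h.norm_left, show e - t • e = (1 - t) • e by module] using h.norm_sub
  grind

lemma exists_isAlt_pos (hE : finrank ℝ E = 2) (h : IsUnitTriangle u v) :
    ∃ ω : E →ₗ[ℝ] E →ₗ[ℝ] ℝ, ω.IsAlt ∧ ω ≠ 0 ∧ 0 < ω u v := by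
  obtain ⟨ω, hω, hω₀⟩ := exists_isAlt_ne_zero_of_finrank_eq_two hE
  rcases (h.apply_ne_zero hE hω hω₀).lt_or_gt with hneg | hpos
  · exact ⟨-ω, fun x ↦ by simp [hω.self_eq_zero], neg_ne_zero.2 hω₀, by simpa using hneg⟩
  · exact ⟨ω, hω, hω₀, hpos⟩

lemma of_apply_le (hE : finrank ℝ E = 2) (hω : ω.IsAlt) (hω₀ : ω ≠ 0)
    (h : IsUnitTriangle e f) (hpos : 0 < ω e f) (hg : ‖g‖ ≤ 1) (hge : ‖g - e‖ ≤ 1)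
    (hle : ω e f ≤ ω e g) : IsUnitTriangle e g ∧ ω e g = ω e f := by
  set l := ω e f / ω e g with hl
  have hgpos : 0 < ω e g := hpos.trans_le hle
  have hl₀ : 0 < l := div_pos hpos hgpos
  have hl₁ : l ≤ 1 := (div_le_one hgpos).2 hle
  obtain ⟨t, ht⟩ := exists_smul_eq_of_isAlt_of_apply_eq_zero hE hω hω₀ (f := f - l • g)
    h.ne_zero_left (by simp [hl, hgpos.ne'])
  have hlg : ‖l • g‖ = l * ‖g‖ := by rw [norm_smul, Real.norm_of_nonneg hl₀.le]
  have hlge : ‖l • g - e‖ ≤ l * ‖g - e‖ + (1 - l) :=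
    calc ‖l • g - e‖ = ‖l • (g - e) + (1 - l) • (-e)‖ := by congr 1; module
      _ ≤ ‖l • (g - e)‖ + ‖(1 - l) • (-e)‖ := norm_add_le _ _
      _ = l * ‖g - e‖ + (1 - l) := by
        rw [norm_smul, norm_smul, Real.norm_of_nonneg hl₀.le,
          Real.norm_of_nonneg (sub_nonneg.2 hl₁), norm_neg, h.norm_left, mul_one]
  -- Both `l • g - e, l • g` and `f - e, f` are chords of length one on the same line.
  obtain ⟨hleft, hright⟩ := eq_of_convexOn_of_le_of_eq_translate
    (convexOn_norm_add_smul (l • g) e) (a := -1) (b := t - 1) (d := 1) (r := 1) one_pos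
    (by rw [neg_one_smul, ← sub_eq_add_neg]; nlinarith)
    (by rw [neg_add_cancel, zero_smul, add_zero, hlg]; nlinarith [norm_nonneg g])
    (by rw [show l • g + (t - 1) • e = f - e by rw [sub_smul, ht]; module, h.symm.norm_sub])
    (by rw [sub_add_cancel, ht, add_sub_cancel, h.norm_right])
  rw [neg_one_smul, ← sub_eq_add_neg] at hleft
  rw [neg_add_cancel, zero_smul, add_zero, hlg] at hright
  have hl_eq : l = 1 := by nlinarith
  rw [hl_eq] at hlge hleft hright
  refine ⟨⟨h.norm_left, by linarith, ?_⟩, ((div_eq_one_iff_eq hgpos.ne').1 hl_eq).symm⟩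
  rw [norm_sub_rev]
  linarith

lemma apply_eq_apply (hE : finrank ℝ E = 2) (hω : ω.IsAlt) (hω₀ : ω ≠ 0)
    (hf : IsUnitTriangle e f) (hg : IsUnitTriangle e g) (hfpos : 0 < ω e f) (hgpos : 0 < ω e g) :
    ω e f = ω e g := by
  rcases le_total (ω e f) (ω e g) with hle | hle
  · exact (of_apply_le hE hω hω₀ hf hfpos hg.norm_right.le hg.symm.norm_sub.le hle).2.symm
  · exact (of_apply_le hE hω hω₀ hg hgpos hf.norm_right.le hf.symm.norm_sub.le hle).2

end IsUnitTriangle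

end UnitTriangle

section PositiveUnitTriangles

variable {E : Type*} [NormedAddCommGroup E] [NormedSpace ℝ E] {ω : E →ₗ[ℝ] E →ₗ[ℝ] ℝ}

/-- The unit triangles that are positively oriented with respect to the area form `ω`. The
orientation condition is not strict, so that the set is visibly closed; equality never occurs. -/
def positiveUnitTriangles (ω : E →ₗ[ℝ] E →ₗ[ℝ] ℝ) : Set (E × E) :=
  {p | IsUnitTriangle p.1 p.2 ∧ 0 ≤ ω p.1 p.2}

lemma pos_of_mem_positiveUnitTriangles (hE : finrank ℝ E = 2) (hω : ω.IsAlt) (hω₀ : ω ≠ 0)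
    {p : E × E} (hp : p ∈ positiveUnitTriangles ω) : 0 < ω p.1 p.2 :=
  hp.2.lt_of_ne' (hp.1.apply_ne_zero hE hω hω₀)

lemma isCompact_positiveUnitTriangles [FiniteDimensional ℝ E] :
    IsCompact (positiveUnitTriangles ω) := by
  have : ProperSpace E := FiniteDimensional.proper ℝ E
  have hcont : Continuous fun p : E × E ↦ ω p.1 p.2 := ω.toContinuousBilinearMap.continuous₂
  have hclosed : IsClosed (positiveUnitTriangles ω) := by
    have : positiveUnitTriangles ω =
        {p | ‖p.1‖ = 1} ∩ {p | ‖p.2‖ = 1} ∩ {p | ‖p.1 - p.2‖ = 1} ∩ {p | 0 ≤ ω p.1 p.2} := by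
      ext p
      exact ⟨fun ⟨⟨h₁, h₂, h₃⟩, h₄⟩ ↦ ⟨⟨⟨h₁, h₂⟩, h₃⟩, h₄⟩,
        fun ⟨⟨⟨h₁, h₂⟩, h₃⟩, h₄⟩ ↦ ⟨⟨h₁, h₂, h₃⟩, h₄⟩⟩
    rw [this]
    exact (((isClosed_eq (by fun_prop) (by fun_prop)).inter
      (isClosed_eq (by fun_prop) (by fun_prop))).inter
      (isClosed_eq (by fun_prop) (by fun_prop))).inter (isClosed_le (by fun_prop) hcont)
  refine ((isCompact_sphere (0 : E) 1).prod (isCompact_sphere (0 : E) 1)).of_isClosed_subset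
    hclosed fun p hp ↦ ?_
  simpa using And.intro hp.1.norm_left hp.1.norm_right

lemma image_fst_positiveUnitTriangles (hE : 1 < Module.rank ℝ E) (hω : ω.IsAlt) :
    Prod.fst '' positiveUnitTriangles ω = sphere (0 : E) 1 := by
  refine Subset.antisymm ?_ fun e he ↦ ?_
  · rintro _ ⟨p, hp, rfl⟩
    simpa using hp.1.norm_left
  · rw [mem_sphere_zero_iff_norm] at he
    obtain ⟨f, hf, hfe⟩ := exists_norm_eq_one_and_norm_sub_eq_one hE (v := e) (by linarith)
    have hef : IsUnitTriangle e f := ⟨he, hf, hfe⟩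
    rcases le_total 0 (ω e f) with h | h
    · exact ⟨(e, f), ⟨hef, h⟩, rfl⟩
    · exact ⟨(e, e - f), ⟨hef.sub_right, by simpa [hω.self_eq_zero] using h⟩, rfl⟩

lemma convex_positiveUnitTriangles_inter_fiber (hE : finrank ℝ E = 2) (hω : ω.IsAlt)
    (hω₀ : ω ≠ 0) (e : E) : Convex ℝ (positiveUnitTriangles ω ∩ Prod.fst ⁻¹' {e}) := by
  rintro ⟨_, f⟩ ⟨hf, rfl⟩ ⟨e, g⟩ ⟨hg, rfl⟩ a b ha hb hab
  have hfpos : 0 < ω e f := pos_of_mem_positiveUnitTriangles hE hω hω₀ hf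
  have hgpos : 0 < ω e g := pos_of_mem_positiveUnitTriangles hE hω hω₀ hg
  have hx : ω e (a • f + b • g) = ω e f := by
    rw [map_add, map_smul, map_smul, ← hf.1.apply_eq_apply hE hω hω₀ hg.1 hfpos hgpos, ← add_smul,
      hab, one_smul]
  have hball : a • f + b • g ∈ closedBall (0 : E) 1 :=
    convex_closedBall 0 1 (by simpa using hf.1.norm_right.le) (by simpa using hg.1.norm_right.le)
      ha hb hab
  have hball' : a • f + b • g ∈ closedBall e 1 :=
    convex_closedBall e 1 (mem_closedBall_iff_norm.2 hf.1.symm.norm_sub.le)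
      (mem_closedBall_iff_norm.2 hg.1.symm.norm_sub.le) ha hb hab
  have hfst : a • e + b • e = e := by rw [← add_smul, hab, one_smul]
  simp only [Prod.smul_mk, Prod.mk_add_mk, hfst]
  exact ⟨⟨(hf.1.of_apply_le hE hω hω₀ hfpos (mem_closedBall_zero_iff.1 hball)
    (mem_closedBall_iff_norm.1 hball') hx.ge).1, (hx.symm ▸ hfpos).le⟩, rfl⟩

lemma isPreconnected_positiveUnitTriangles (hE : finrank ℝ E = 2) (hω : ω.IsAlt)
    (hω₀ : ω ≠ 0) : IsPreconnected (positiveUnitTriangles ω) := by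
  have : FiniteDimensional ℝ E := .of_finrank_eq_succ hE
  have hrank : 1 < Module.rank ℝ E := mod_cast lt_rank_of_lt_finrank (hE ▸ one_lt_two)
  refine isPreconnected_of_isPreconnected_image_of_fibers isCompact_positiveUnitTriangles
    continuousOn_fst ?_ fun e _ ↦
      (convex_positiveUnitTriangles_inter_fiber hE hω hω₀ e).isPreconnected
  rw [image_fst_positiveUnitTriangles hrank hω]
  exact isPreconnected_sphere hrank 0 1

lemma IsUnitTriangle.exists_norm_add_sub_add_eq_one (hE : finrank ℝ E = 2) {u v : E}
    (h : IsUnitTriangle u v) :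
    ∃ u' v' : E, IsUnitTriangle u' v' ∧ ‖(u + v) - (u' + v')‖ = 1 := by
  obtain ⟨ω, hω, hω₀, hpos⟩ := h.exists_isAlt_pos hE
  have hmem : (u, v) ∈ positiveUnitTriangles ω := ⟨h, hpos.le⟩
  have hneg : (-u, -v) ∈ positiveUnitTriangles ω := ⟨h.neg, by simpa using hpos.le⟩
  have hfar : 1 ≤ ‖(u + v) - (-u + -v)‖ := by
    rw [show (u + v) - (-u + -v) = (2 : ℝ) • (u + v) by module, norm_smul, Real.norm_two]
    linarith [h.one_le_norm_add]
  obtain ⟨p, hp, hdist⟩ := (isPreconnected_positiveUnitTriangles hE hω hω₀).intermediate_value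
    hmem hneg (f := fun p ↦ ‖(u + v) - (p.1 + p.2)‖) (by fun_prop) ⟨by simp, hfar⟩
  exact ⟨p.1, p.2, hp.1, hdist⟩

end PositiveUnitTriangles

section NoLongSegment

/-- The unit sphere of `F` contains no segment of length greater than one. -/
def NoLongSegmentInUnitSphere (F : Type*) [NormedAddCommGroup F] [NormedSpace ℝ F] : Prop :=
  ∀ c d : F, segment ℝ c d ⊆ sphere 0 1 → ‖c - d‖ ≤ 1

variable {F : Type*} [NormedAddCommGroup F] [NormedSpace ℝ F] {e f g : F}

namespace IsUnitTriangle

lemma one_lt_norm_add_smul (hF : NoLongSegmentInUnitSphere F) (h : IsUnitTriangle e f) {t : ℝ}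
    (ht : 0 < t) : 1 < ‖f + t • e‖ := by
  have hk := convexOn_norm_add_smul f e
  have hk₀ : ‖f + (0 : ℝ) • e‖ = 1 := by simpa using h.norm_right
  have hk₁ : ‖f + (-1 : ℝ) • e‖ = 1 := by simpa [← sub_eq_add_neg] using h.symm.norm_sub
  have one_le {s : ℝ} (hs : 0 ≤ s) : 1 ≤ ‖f + s • e‖ :=
    hk₀ ▸ hk.le_right_of_left_le'' (mem_univ (-1)) (mem_univ s) neg_one_lt_zero hs
      (hk₁.trans hk₀.symm).le
  refine (one_le ht.le).lt_of_ne' fun htop ↦ ?_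
  have hline {s : ℝ} (hs : s ∈ Icc (-1) t) : ‖f + s • e‖ = 1 := by
    refine le_antisymm ?_ ?_
    · exact (hk.le_max_of_mem_Icc (mem_univ (-1)) (mem_univ t) hs).trans
        (max_le hk₁.le htop.le)
    · rcases le_total 0 s with h0 | h0
      · exact one_le h0
      · exact hk₀ ▸ hk.le_left_of_right_le'' (mem_univ s) (mem_univ t) h0 ht
          (htop.trans hk₀.symm).le
  have hsegment : segment ℝ (f - e) (f + t • e) ⊆ sphere 0 1 := by
    rintro _ ⟨a, b, ha, hb, hab, rfl⟩
    obtain rfl : a = 1 - b := by linarith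
    rw [mem_sphere_zero_iff_norm,
      show (1 - b) • (f - e) + b • (f + t • e) = f + (b * t - (1 - b)) • e by module]
    exact hline ⟨by nlinarith, by nlinarith⟩
  have hle := hF _ _ hsegment
  rw [show f - e - (f + t • e) = -((1 + t) • e) by module, norm_neg, norm_smul, h.norm_left,
    mul_one, Real.norm_of_nonneg (by positivity)] at hle
  linarith

lemma one_lt_norm_add (hF : NoLongSegmentInUnitSphere F) (h : IsUnitTriangle e f) :
    1 < ‖e + f‖ := by
  simpa [add_comm] using h.one_lt_norm_add_smul hF one_pos

lemma eq_of_apply_pos (hF₂ : finrank ℝ F = 2) (hF : NoLongSegmentInUnitSphere F)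
    {ω : F →ₗ[ℝ] F →ₗ[ℝ] ℝ} (hω : ω.IsAlt) (hω₀ : ω ≠ 0) (hf : IsUnitTriangle e f)
    (hg : IsUnitTriangle e g) (hfpos : 0 < ω e f) (hgpos : 0 < ω e g) : g = f := by
  obtain ⟨t, ht⟩ := exists_smul_eq_of_isAlt_of_apply_eq_zero hF₂ hω hω₀ (f := g - f)
    hf.ne_zero_left (by simp [hf.apply_eq_apply hF₂ hω hω₀ hg hfpos hgpos])
  rcases lt_trichotomy t 0 with hneg | rfl | hpos
  · have := hg.one_lt_norm_add_smul hF (neg_pos.2 hneg)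
    rw [neg_smul, ht, neg_sub, add_sub_cancel, hf.norm_right] at this
    exact (lt_irrefl 1 this).elim
  · rwa [zero_smul, eq_comm, sub_eq_zero] at ht
  · have := hf.one_lt_norm_add_smul hF hpos
    rw [ht, add_sub_cancel, hg.norm_right] at this
    exact (lt_irrefl 1 this).elim

lemma eq_or_eq_sub (hF₂ : finrank ℝ F = 2) (hF : NoLongSegmentInUnitSphere F)
    (hf : IsUnitTriangle e f) (hg : IsUnitTriangle e g) : g = f ∨ g = e - f := by
  obtain ⟨ω, hω, hω₀, hpos⟩ := hf.exists_isAlt_pos hF₂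
  rcases (hg.apply_ne_zero hF₂ hω hω₀).lt_or_gt with hgneg | hgpos
  · have hpos' : 0 < ω e (e - g) := by simpa [hω.self_eq_zero] using hgneg
    rw [← hf.eq_of_apply_pos hF₂ hF hω hω₀ hg.sub_right hpos hpos', sub_sub_cancel]
    exact .inr rfl
  · exact .inl (hf.eq_of_apply_pos hF₂ hF hω hω₀ hg hpos hgpos)

end IsUnitTriangle

lemma eq_or_add_eq_add_of_norm_sub_eq_one (hF₂ : finrank ℝ F = 2)
    (hF : NoLongSegmentInUnitSphere F) {x y a b : F} (hab : ‖a - b‖ = 1) (hxa : ‖x - a‖ = 1)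
    (hxb : ‖x - b‖ = 1) (hya : ‖y - a‖ = 1) (hyb : ‖y - b‖ = 1) :
    y = x ∨ y + x = a + b ∧ 1 < ‖y - x‖ := by
  have hx : IsUnitTriangle (a - b) (x - b) :=
    ⟨hab, hxb, by rw [sub_sub_sub_cancel_right, norm_sub_rev, hxa]⟩
  have hy : IsUnitTriangle (a - b) (y - b) :=
    ⟨hab, hyb, by rw [sub_sub_sub_cancel_right, norm_sub_rev, hya]⟩
  refine (hx.eq_or_eq_sub hF₂ hF hy).imp sub_left_inj.1 fun h ↦ ?_
  rw [sub_sub_sub_cancel_right] at h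
  have hsum : y + x = a + b := by linear_combination (norm := module) h
  have htriangle : IsUnitTriangle (y - a) (y - b) :=
    ⟨hya, hyb, by rw [sub_sub_sub_cancel_left, norm_sub_rev, hab]⟩
  refine ⟨hsum, ?_⟩
  convert htriangle.one_lt_norm_add hF using 2
  linear_combination (norm := module) -hsum

end NoLongSegment

section ParallelogramLaw

variable {A B : Type*} [AddCommMonoid A] [AddCommGroup B] {φ : A → B}

lemma apply_add_nsmul_of_apply_add_add {e : A}
    (h : ∀ x, φ (x + e + e) + φ x = φ (x + e) + φ (x + e)) (x : A) (n : ℕ) :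
    φ (x + n • e) = φ x + n • (φ (x + e) - φ x) := by
  have hstep (n : ℕ) : φ (x + (n + 1) • e) - φ (x + n • e) = φ (x + e) - φ x := by
    induction n with
    | zero => simp
    | succ n ih =>
      rw [← ih, succ_nsmul _ (n + 1), succ_nsmul _ n]
      simp only [← add_assoc]
      linear_combination (norm := module) h (x + n • e)
  induction n with
  | zero => simp
  | succ n ih => rw [← sub_add_cancel (φ (x + (n + 1) • e)), hstep, ih, succ_nsmul]; abel

lemma apply_add_add_of_closure_eq_top {s : Set A} (hs : AddSubmonoid.closure s = ⊤)
    (h : ∀ u ∈ s, ∀ v ∈ s, ∀ x, φ (x + u + v) + φ x = φ (x + u) + φ (x + v)) (u v x : A) :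
    φ (x + u + v) + φ x = φ (x + u) + φ (x + v) := by
  have hu : u ∈ AddSubmonoid.closure s := hs ▸ AddSubmonoid.mem_top u
  have hv : v ∈ AddSubmonoid.closure s := hs ▸ AddSubmonoid.mem_top v
  induction hu, hv using AddSubmonoid.closure_induction₂ generalizing x with
  | mem u v hu hv => exact h u hu v hv x
  | zero_left v _ => rw [add_zero, add_comm]
  | zero_right u _ => simp only [add_zero]
  | add_left u u' v _ _ _ ih ih' =>
    simp only [← add_assoc]
    linear_combination (norm := module) ih x + ih' (x + u)
  | add_right v v' u _ _ _ ih ih' =>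
    have := ih' (x + v)
    rw [add_right_comm x v u] at this
    simp only [← add_assoc]
    linear_combination (norm := module) ih x + this

end ParallelogramLaw

section Isometry

variable {E F : Type*} [NormedAddCommGroup E] [NormedSpace ℝ E] [NormedAddCommGroup F]
  [NormedSpace ℝ F]

lemma eq_zero_of_norm_nsmul_le {w : F} {C : ℝ} (h : ∀ n : ℕ, ‖n • w‖ ≤ C) : w = 0 := by
  by_contra hw
  obtain ⟨n, hn⟩ := exists_nat_gt (C / ‖w‖)
  rw [div_lt_iff₀ (norm_pos_iff.2 hw)] at hn
  have := h n
  rw [RCLike.norm_nsmul ℝ, nsmul_eq_mul] at this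
  exact this.not_gt hn

lemma exists_linearIsometry_of_norm_map_eq_one (hE : 1 < Module.rank ℝ E)
    (A : E →+ F) (hA : ∀ u, ‖u‖ = 1 → ‖A u‖ = 1) : ∃ L : E →ₗᵢ[ℝ] F, ⇑L = A := by
  have : Nontrivial E := rank_pos_iff_nontrivial.1 (zero_lt_one.trans hE)
  have hbound : ∀ y ∈ A '' ball 0 2, ‖y‖ ≤ 2 := by
    rintro _ ⟨v, hv, rfl⟩
    obtain ⟨u, hu, hvu⟩ :=
      exists_norm_eq_one_and_norm_sub_eq_one hE (mem_ball_zero_iff.1 hv).le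
    calc ‖A v‖ = ‖A u + A (v - u)‖ := by rw [← map_add, add_sub_cancel]
      _ ≤ ‖A u‖ + ‖A (v - u)‖ := norm_add_le _ _
      _ = 2 := by rw [hA u hu, hA _ hvu, one_add_one_eq_two]
  have hcont : Continuous A := A.continuous_of_isBounded_nhds_zero (ball_mem_nhds 0 two_pos)
    (isBounded_iff_forall_norm_le.2 ⟨2, hbound⟩)
  refine ⟨⟨(A.toRealLinearMap hcont).toLinearMap, fun v ↦ ?_⟩, rfl⟩
  obtain ⟨u, hu, hvu⟩ := exists_norm_eq_one_and_norm_smul_eq v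
  have hAu : ‖A.toRealLinearMap hcont u‖ = 1 := hA u hu
  calc ‖A.toRealLinearMap hcont v‖ = ‖A.toRealLinearMap hcont (‖v‖ • u)‖ := by rw [hvu]
    _ = ‖v‖ := by rw [map_smul, norm_smul, norm_norm, hAu, mul_one]

end Isometry

section PreservesUnitDist

variable {E F : Type*} [NormedAddCommGroup E] [NormedAddCommGroup F]

/-- The map `φ` preserves distance one; nothing is assumed about other distances. -/
def PreservesUnitDist (φ : E → F) : Prop :=
  ∀ x y, ‖x - y‖ = 1 → ‖φ x - φ y‖ = 1

namespace PreservesUnitDist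

variable [NormedSpace ℝ F] {φ : E → F} {u v e : E}

lemma apply_add_add_eq_or (hφ : PreservesUnitDist φ) (hF₂ : finrank ℝ F = 2)
    (hF : NoLongSegmentInUnitSphere F) (h : IsUnitTriangle u v) (x : E) :
    φ (x + u + v) = φ x ∨
      φ (x + u + v) + φ x = φ (x + u) + φ (x + v) ∧ 1 < ‖φ (x + u + v) - φ x‖ := by
  refine eq_or_add_eq_add_of_norm_sub_eq_one hF₂ hF (hφ _ _ ?_) (hφ _ _ ?_) (hφ _ _ ?_)
    (hφ _ _ ?_) (hφ _ _ ?_)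
  · simpa using h.norm_sub
  · simpa using h.norm_left
  · simpa using h.norm_right
  · simpa using h.norm_right
  · simpa [add_right_comm x u v] using h.norm_left

variable [NormedSpace ℝ E]

lemma apply_add_add_of_isUnitTriangle (hφ : PreservesUnitDist φ) (hE : finrank ℝ E = 2)
    (hF₂ : finrank ℝ F = 2) (hF : NoLongSegmentInUnitSphere F) (h : IsUnitTriangle u v) (x : E) :
    φ (x + u + v) + φ x = φ (x + u) + φ (x + v) := by
  rcases hφ.apply_add_add_eq_or hF₂ hF h x with hfold | hlaw
  · exfalso
    obtain ⟨u', v', h', hdist⟩ := h.exists_norm_add_sub_add_eq_one hE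
    have hdist' : ‖φ (x + u' + v') - φ x‖ = 1 := by
      rw [← hfold, norm_sub_rev]
      exact hφ _ _ (by simpa only [add_assoc, add_sub_add_left_eq_sub] using hdist)
    rcases hφ.apply_add_add_eq_or hF₂ hF h' x with hfold' | ⟨-, hlong⟩
    · simp [hfold'] at hdist'
    · exact hlong.ne' hdist'
  · exact hlaw.1

lemma apply_add_add_self (hφ : PreservesUnitDist φ) (hE : finrank ℝ E = 2)
    (hF₂ : finrank ℝ F = 2) (hF : NoLongSegmentInUnitSphere F) (he : ‖e‖ = 1) (x : E) :
    φ (x + e + e) + φ x = φ (x + e) + φ (x + e) := by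
  have hrank : 1 < Module.rank ℝ E := mod_cast lt_rank_of_lt_finrank (hE ▸ one_lt_two)
  obtain ⟨f, hf, hef⟩ := exists_norm_eq_one_and_norm_sub_eq_one hrank (v := e) (by linarith)
  have h : IsUnitTriangle e f := ⟨he, hf, hef⟩
  have hlaw := hφ.apply_add_add_of_isUnitTriangle hE hF₂ hF h x
  have hlaw' := hφ.apply_add_add_of_isUnitTriangle hE hF₂ hF h.sub_right (x + f)
  rw [add_right_comm x f e, add_assoc (x + e) f, add_assoc x f, add_sub_cancel] at hlaw'
  linear_combination (norm := module) hlaw + hlaw'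

lemma apply_add_add_of_norm_eq_one (hφ : PreservesUnitDist φ) (hE : finrank ℝ E = 2)
    (hF₂ : finrank ℝ F = 2) (hF : NoLongSegmentInUnitSphere F) (hu : ‖u‖ = 1) (hv : ‖v‖ = 1)
    (x : E) : φ (x + u + v) + φ x = φ (x + u) + φ (x + v) := by
  have hline := apply_add_nsmul_of_apply_add_add (hφ.apply_add_add_self hE hF₂ hF hv)
  have hunit (y : E) : ‖φ (y + u) - φ y‖ = 1 := hφ _ _ (by simpa using hu)
  suffices (φ (x + u + v) - φ (x + u)) - (φ (x + v) - φ x) = 0 by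
    linear_combination (norm := module) this
  refine eq_zero_of_norm_nsmul_le (C := 2) fun n ↦ ?_
  calc ‖n • ((φ (x + u + v) - φ (x + u)) - (φ (x + v) - φ x))‖
      = ‖(φ (x + n • v + u) - φ (x + n • v)) - (φ (x + u) - φ x)‖ := by
        rw [add_right_comm x _ u, hline x, hline (x + u)]; congr 1; module
    _ ≤ ‖φ (x + n • v + u) - φ (x + n • v)‖ + ‖φ (x + u) - φ x‖ := norm_sub_le _ _
    _ = 2 := by rw [hunit, hunit, one_add_one_eq_two]

end PreservesUnitDist

theorem aleksandrov_no_long_segment_general [NormedSpace ℝ E] [NormedSpace ℝ F]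
    (hE : finrank ℝ E = 2) (hF₂ : finrank ℝ F = 2) (hF : NoLongSegmentInUnitSphere F) {φ : E → F}
    (hφ : PreservesUnitDist φ) : ∃ Φ : E →ᵃⁱ[ℝ] F, ⇑Φ = φ := by
  have hrank : 1 < Module.rank ℝ E := mod_cast lt_rank_of_lt_finrank (hE ▸ one_lt_two)
  have hlaw := apply_add_add_of_closure_eq_top (addSubmonoid_closure_sphere_eq_top hrank)
    fun u hu v hv ↦ hφ.apply_add_add_of_norm_eq_one hE hF₂ hF (mem_sphere_zero_iff_norm.1 hu)
      (mem_sphere_zero_iff_norm.1 hv)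
  let A : E →+ F := AddMonoidHom.mk' (fun v ↦ φ v - φ 0) fun u v ↦ by
    have := hlaw u v 0
    simp only [zero_add] at this
    linear_combination (norm := module) this
  obtain ⟨L, hL⟩ := exists_linearIsometry_of_norm_map_eq_one hrank A
    fun u hu ↦ hφ u 0 (by simpa using hu)
  refine ⟨(AffineIsometryEquiv.constVAdd ℝ F (φ 0)).toAffineIsometry.comp L.toAffineIsometry, ?_⟩
  ext v
  simp [hL, A]

end PreservesUnitDist

section NormOnPlane

namespace IsNorm

variable {N : ℝ × ℝ → ℝ}

/-- A copy of `ℝ × ℝ` that carries the norm `N` instead of the product norm. -/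
def Plane (_ : IsNorm N) : Type := ℝ × ℝ

variable (hN : IsNorm N)

noncomputable instance : AddCommGroup hN.Plane := inferInstanceAs (AddCommGroup (ℝ × ℝ))

noncomputable instance : Module ℝ hN.Plane := inferInstanceAs (Module ℝ (ℝ × ℝ))

instance : Norm hN.Plane := ⟨N⟩

lemma normedSpaceCore : NormedSpace.Core ℝ hN.Plane := by
  have h₀ : N 0 = 0 := by simpa using hN.smul_eq 0 0
  have hnonneg (x : ℝ × ℝ) : 0 ≤ N x := by
    have hneg : N (-x) = N x := by simpa using hN.smul_eq (-1) x
    have hadd := hN.add_le x (-x)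
    rw [add_neg_cancel, h₀, hneg] at hadd
    exact nonneg_add_self_iff.1 hadd
  exact ⟨⟨hnonneg, hN.smul_eq, hN.add_le⟩,
    fun x ↦ ⟨hN.eq_zero_of x, fun hx ↦ (congrArg N hx).trans h₀⟩⟩

noncomputable instance : NormedAddCommGroup hN.Plane := .ofCore hN.normedSpaceCore

noncomputable instance : NormedSpace ℝ hN.Plane := .ofCore hN.normedSpaceCore

lemma finrank_plane : finrank ℝ hN.Plane = 2 := by
  change finrank ℝ (ℝ × ℝ) = 2
  simp

end IsNorm

end NormOnPlane

/-- If the unit sphere of `N` contains no segment whose endpoints are at distance `> 1`,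
then every unit-distance preserving map is an affine isometry. -/
theorem aleksandrov_no_long_segment (N : ℝ × ℝ → ℝ) (hN : IsNorm N)
    (hS : ¬ ∃ c d : ℝ × ℝ, N c = 1 ∧ N d = 1 ∧ 1 < N (c - d) ∧
      segment ℝ c d ⊆ {x : ℝ × ℝ | N x = 1})
    (φ : ℝ × ℝ → ℝ × ℝ)
    (hφ : ∀ x y : ℝ × ℝ, N (x - y) = 1 → N (φ x - φ y) = 1) :
    (∀ x y : ℝ × ℝ, N (φ x - φ y) = N (x - y)) ∧
      ∃ (L : (ℝ × ℝ) →ₗ[ℝ] (ℝ × ℝ)) (t : ℝ × ℝ), ∀ x : ℝ × ℝ, φ x = L x + t := by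
  have hF : NoLongSegmentInUnitSphere hN.Plane := fun c d hcd ↦ by
    by_contra! hlt
    have hcd' : segment ℝ c d ⊆ {x : hN.Plane | N x = 1} := fun x hx ↦
      mem_sphere_zero_iff_norm.1 (hcd hx)
    exact hS ⟨c, d, hcd' (left_mem_segment ℝ c d), hcd' (right_mem_segment ℝ c d), hlt, hcd'⟩
  obtain ⟨Φ, rfl⟩ :=
    aleksandrov_no_long_segment_general hN.finrank_plane hN.finrank_plane hF (φ := φ) hφ
  refine ⟨fun x y ↦ ?_, Φ.linear, Φ 0, fun x ↦ ?_⟩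
  · exact (dist_eq_norm _ _).symm.trans ((Φ.dist_map x y).trans (dist_eq_norm _ _))
  · exact congrFun Φ.toAffineMap.decomp x
end

section
/- Let ‖·‖ be a URTC-norm on ℝ², let d > 0, and let φ : ℝ² → ℝ² be a map that preserves distance d. Then for every positive integer n, φ preserves distance d/n, i.e., ‖x − y‖ = d/n implies ‖φ(x) − φ(y)‖ = d/n. -/
/-!
Let `f` preserve unit distance. If `a`, `b`, `c` is a unit equilateral triangle, then `b + c - a`
is the only other point at unit distance from `b` and `c`, so `f` maps it either to
`f b + f c - f a` or to `f a`. The second case is excluded by rotating the triangle about `a` until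
the far vertex has moved by exactly `1`: its image would be at unit distance from `f a`, while the
two possible images of a far vertex are `f a` and a point at distance greater than `1` from `f a`.
So `f` respects rhombi, hence maps arithmetic progressions of unit step to arithmetic progressions.
Points `x`, `y` at distance `1 / n` have a common unit neighbour `c`, and the progressions from `c`
through `x` and through `y` are at distance exactly `1` after `n` steps.
-/

open Metric Set

section PreservesDist

variable {E F : Type*} [NormedAddCommGroup E] [NormedAddCommGroup F]

/-- The map `f` preserves the distance `d`; no other distance is constrained. -/
def PreservesDist (f : E → F) (d : ℝ) : Prop :=
  ∀ x y, ‖x - y‖ = d → ‖f x - f y‖ = d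

theorem preservesDist_conj_smul_iff [NormedSpace ℝ E] [NormedSpace ℝ F] {f : E → F} {c d : ℝ}
    (hc : 0 < c) :
    PreservesDist (fun x ↦ c⁻¹ • f (c • x)) d ↔ PreservesDist f (c * d) := by
  have hscale (x y : E) : ‖c • x - c • y‖ = c * ‖x - y‖ := by
    rw [← smul_sub, norm_smul_of_nonneg hc.le]
  have hscale_inv (x y : F) : ‖c⁻¹ • x - c⁻¹ • y‖ = d ↔ ‖x - y‖ = c * d := by
    rw [← smul_sub, norm_smul_of_nonneg (inv_nonneg.2 hc.le), inv_mul_eq_iff_eq_mul₀ hc.ne']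
  simp only [PreservesDist, hscale_inv]
  refine ⟨fun h x y hxy ↦ ?_, fun h x y hxy ↦ h _ _ (by rw [hscale, hxy])⟩
  have hxy' : ‖c⁻¹ • x - c⁻¹ • y‖ = d := by
    rw [← smul_sub, norm_smul_of_nonneg (inv_nonneg.2 hc.le), hxy, inv_mul_cancel_left₀ hc.ne']
  simpa only [smul_inv_smul₀ hc.ne'] using h _ _ hxy'

end PreservesDist

/-- The vertices `a`, `b`, `c` form an equilateral triangle of side length `1`. -/
structure IsUnitTriangle_s18 {E : Type*} [NormedAddCommGroup E] (a b c : E) : Prop where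
  norm_sub₁₂ : ‖a - b‖ = 1
  norm_sub₁₃ : ‖a - c‖ = 1
  norm_sub₂₃ : ‖b - c‖ = 1

/-- The uniqueness half of the URTC property: a unit segment is the side of at most two unit
equilateral triangles. The existence half holds in every normed space of dimension at least two. -/
def HasAtMostTwoApexes (E : Type*) [NormedAddCommGroup E] : Prop :=
  ∀ a b : E, ‖a - b‖ = 1 → {x : E | ‖a - x‖ = 1 ∧ ‖b - x‖ = 1}.encard ≤ 2

namespace IsUnitTriangle_s18

variable {E F : Type*} [NormedAddCommGroup E] [NormedAddCommGroup F] {a b c x : E}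

theorem rotate (h : IsUnitTriangle_s18 a b c) : IsUnitTriangle_s18 b c a :=
  ⟨h.norm_sub₂₃, by rw [norm_sub_rev, h.norm_sub₁₂], by rw [norm_sub_rev, h.norm_sub₁₃]⟩

theorem swap (h : IsUnitTriangle_s18 a b c) : IsUnitTriangle_s18 b a c :=
  ⟨by rw [norm_sub_rev, h.norm_sub₁₂], h.norm_sub₂₃, h.norm_sub₁₃⟩

theorem reflect_apex (h : IsUnitTriangle_s18 a b c) : IsUnitTriangle_s18 a b (a + b - c) where
  norm_sub₁₂ := h.norm_sub₁₂
  norm_sub₁₃ := by rw [← h.norm_sub₂₃, norm_sub_rev b c]; congr 1; abel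
  norm_sub₂₃ := by rw [← h.norm_sub₁₃, norm_sub_rev a c]; congr 1; abel

theorem pointReflection (h : IsUnitTriangle_s18 a b c) :
    IsUnitTriangle_s18 a (a + a - b) (a + a - c) where
  norm_sub₁₂ := by rw [← h.norm_sub₁₂, norm_sub_rev a b]; congr 1; abel
  norm_sub₁₃ := by rw [← h.norm_sub₁₃, norm_sub_rev a c]; congr 1; abel
  norm_sub₂₃ := by rw [← h.norm_sub₂₃, norm_sub_rev b c]; congr 1; abel

theorem map (h : IsUnitTriangle_s18 a b c) {f : E → F} (hf : PreservesDist f 1) :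
    IsUnitTriangle_s18 (f a) (f b) (f c) :=
  ⟨hf _ _ h.norm_sub₁₂, hf _ _ h.norm_sub₁₃, hf _ _ h.norm_sub₂₃⟩

theorem isCompact_setOf [ProperSpace E] (a : E) :
    IsCompact {p : E × E | IsUnitTriangle_s18 a p.1 p.2} := by
  have hside : IsClosed {p : E × E | ‖p.1 - p.2‖ = 1} :=
    isClosed_eq (by fun_prop) continuous_const
  convert ((isCompact_sphere a 1).prod (isCompact_sphere a 1)).inter_right hside using 1
  ext p
  simp only [mem_inter_iff, mem_prod, mem_sphere', dist_eq_norm, mem_ofPred_eq]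
  exact ⟨fun h ↦ ⟨⟨h.norm_sub₁₂, h.norm_sub₁₃⟩, h.norm_sub₂₃⟩, fun h ↦ ⟨h.1.1, h.1.2, h.2⟩⟩

variable [NormedSpace ℝ E]

theorem reflect_apex_ne (h : IsUnitTriangle_s18 a b c) : a + b - c ≠ c := by
  intro hc
  have hab : b - a = (2 : ℝ) • (b - c) := by
    rw [two_smul]
    nth_rw 1 [← hc]
    abel
  have hnorm := congrArg norm hab
  rw [norm_smul, norm_sub_rev, h.norm_sub₁₂, h.norm_sub₂₃] at hnorm
  norm_num at hnorm

theorem eq_or_eq_of_hasAtMostTwoApexes (hE : HasAtMostTwoApexes E) (h : IsUnitTriangle_s18 a b c)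
    (hx : IsUnitTriangle_s18 a b x) : x = c ∨ x = a + b - c := by
  by_contra! hne
  have hsub : {x, c, a + b - c} ⊆ {y | ‖a - y‖ = 1 ∧ ‖b - y‖ = 1} := by
    rintro y (rfl | rfl | rfl)
    exacts [⟨hx.norm_sub₁₃, hx.norm_sub₂₃⟩, ⟨h.norm_sub₁₃, h.norm_sub₂₃⟩,
      ⟨h.reflect_apex.norm_sub₁₃, h.reflect_apex.norm_sub₂₃⟩]
  have hthree : ({x, c, a + b - c} : Set E).encard = 3 :=
    encard_eq_three.2 ⟨x, c, _, hne.1, hne.2, h.reflect_apex_ne.symm, rfl⟩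
  have hle := (encard_le_encard hsub).trans (hE a b h.norm_sub₁₂)
  rw [hthree] at hle
  exact absurd hle (by decide)

theorem one_lt_norm_far_vertex (hE : HasAtMostTwoApexes E) (h : IsUnitTriangle_s18 a b c) :
    1 < ‖(b + c - a) - a‖ := by
  refine lt_of_le_of_ne ?_ fun hone ↦ ?_
  · have hdouble : (b + c - a - a) + (b - c) = (2 : ℝ) • (b - a) := by rw [two_smul]; abel
    have htriangle := norm_add_le (b + c - a - a) (b - c)
    rw [hdouble, norm_smul, norm_sub_rev b a, h.norm_sub₁₂, h.norm_sub₂₃, Real.norm_two]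
      at htriangle
    linarith
  · have hfar : IsUnitTriangle_s18 a b (b + c - a) :=
      ⟨h.norm_sub₁₂, by rw [norm_sub_rev, ← hone], by rw [← h.norm_sub₁₃]; congr 1; abel⟩
    rcases h.eq_or_eq_of_hasAtMostTwoApexes hE hfar with heq | heq
    · have hzero : ‖b - a‖ = 0 := by rw [norm_eq_zero, ← sub_eq_zero.2 heq]; abel
      rw [norm_sub_rev, h.norm_sub₁₂] at hzero
      exact one_ne_zero hzero
    · have hzero : ‖(2 : ℝ) • (c - a)‖ = 0 := by
        rw [norm_eq_zero, ← sub_eq_zero.2 heq, two_smul]; abel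
      rw [norm_smul, norm_sub_rev, h.norm_sub₁₃] at hzero
      norm_num at hzero

end IsUnitTriangle_s18

-- `g` descends to the image of `π`, and compactness makes the images of its sublevel sets closed.
theorem exists_eq_of_isCompact_of_constant_on_fibers {X Y : Type*} [TopologicalSpace X]
    [TopologicalSpace Y] [T2Space Y] {K : Set X} (hK : IsCompact K) {π : X → Y}
    (hπ : ContinuousOn π K) (hconn : IsPreconnected (π '' K)) {g : X → ℝ}
    (hg : ContinuousOn g K) (hfib : ∀ p ∈ K, ∀ q ∈ K, π p = π q → g p = g q)
    {p q : X} (hp : p ∈ K) (hq : q ∈ K) {t : ℝ} (hpt : g p ≤ t) (htq : t ≤ g q) :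
    ∃ r ∈ K, g r = t := by
  have hclosed {J : Set ℝ} (hJ : IsClosed J) : IsClosed (π '' (K ∩ g ⁻¹' J)) := by
    obtain ⟨C, hC, hKC⟩ := continuousOn_iff_isClosed.1 hg J hJ
    rw [inter_comm, hKC, inter_comm]
    exact ((hK.inter_right hC).image_of_continuousOn (hπ.mono inter_subset_left)).isClosed
  have hcover : π '' K ⊆ π '' (K ∩ g ⁻¹' Iic t) ∪ π '' (K ∩ g ⁻¹' Ici t) := by
    rw [← image_union, ← inter_union_distrib_left, ← preimage_union, Iic_union_Ici,
      preimage_univ, inter_univ]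
  obtain ⟨_, -, ⟨r, ⟨hr, hrt⟩, rfl⟩, s, ⟨hs, hts⟩, hsr⟩ :=
    isPreconnected_closed_iff.1 hconn _ _ (hclosed isClosed_Iic) (hclosed isClosed_Ici) hcover
      ⟨π p, mem_image_of_mem π hp, mem_image_of_mem π ⟨hp, hpt⟩⟩
      ⟨π q, mem_image_of_mem π hq, mem_image_of_mem π ⟨hq, htq⟩⟩
  exact ⟨r, hr, le_antisymm hrt (hfib s hs r hr hsr ▸ hts)⟩

section NormedSpace

variable {E : Type*} [NormedAddCommGroup E] [NormedSpace ℝ E]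

theorem exists_norm_sub_eq_of_norm_sub_le (hrank : 1 < Module.rank ℝ E) {a b : E} {r : ℝ}
    (hab : ‖a - b‖ ≤ 2 * r) : ∃ x, ‖a - x‖ = r ∧ ‖b - x‖ = r := by
  have : Nontrivial E := rank_pos_iff_nontrivial.1 (zero_lt_one.trans hrank)
  have hr : 0 ≤ r := by linarith [norm_nonneg (a - b)]
  obtain ⟨e, he, hb⟩ : ∃ e : E, ‖e‖ = 1 ∧ b = a + ‖a - b‖ • e := by
    rcases eq_or_ne b a with rfl | hne
    · obtain ⟨e, he⟩ := exists_norm_eq E zero_le_one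
      exact ⟨e, he, by simp⟩
    · have hpos : ‖b - a‖ ≠ 0 := norm_ne_zero_iff.2 (sub_ne_zero.2 hne)
      exact ⟨‖b - a‖⁻¹ • (b - a), norm_smul_inv_norm (𝕜 := ℝ) (sub_ne_zero.2 hne), by
        rw [norm_sub_rev, smul_inv_smul₀ hpos, add_sub_cancel]⟩
  have hmem (s : ℝ) (hs : |s| = r) : a - s • e ∈ sphere a r := by
    simp [norm_smul, he, hs]
  have hdist (s : ℝ) : ‖b - (a - s • e)‖ = |‖a - b‖ + s| := by
    have hdiff : b - (a - s • e) = (‖a - b‖ + s) • e := by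
      nth_rw 1 [hb]
      module
    rw [hdiff, norm_smul, he, mul_one, Real.norm_eq_abs]
  have hval : r ∈ Icc ‖b - (a - (-r) • e)‖ ‖b - (a - r • e)‖ := by
    rw [mem_Icc, hdist, hdist]
    exact ⟨abs_le.2 ⟨by linarith [norm_nonneg (a - b)], by linarith⟩,
      le_abs.2 (.inl (by linarith [norm_nonneg (a - b)]))⟩
  obtain ⟨x, hx, hbx⟩ := (isPreconnected_sphere hrank a r).intermediate_value
    (f := fun x ↦ ‖b - x‖) (hmem (-r) (by rw [abs_neg, abs_of_nonneg hr]))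
    (hmem r (abs_of_nonneg hr)) (by fun_prop) hval
  exact ⟨x, by rwa [mem_sphere', dist_eq_norm] at hx, hbx⟩

theorem exists_isUnitTriangle (hrank : 1 < Module.rank ℝ E) {a b : E} (hab : ‖a - b‖ = 1) :
    ∃ c, IsUnitTriangle_s18 a b c := by
  obtain ⟨c, hac, hbc⟩ := exists_norm_sub_eq_of_norm_sub_le hrank (r := 1) (by linarith)
  exact ⟨c, hab, hac, hbc⟩

theorem image_fst_setOf_isUnitTriangle (hrank : 1 < Module.rank ℝ E) (a : E) :
    Prod.fst '' {p : E × E | IsUnitTriangle_s18 a p.1 p.2} = sphere a 1 := by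
  ext b
  rw [mem_sphere', dist_eq_norm]
  constructor
  · rintro ⟨p, hp, rfl⟩
    exact hp.norm_sub₁₂
  · intro hab
    obtain ⟨c, hc⟩ := exists_isUnitTriangle hrank hab
    exact ⟨(b, c), hc, rfl⟩

theorem IsUnitTriangle_s18.exists_eq_of_le_of_ge [FiniteDimensional ℝ E]
    (hrank : 1 < Module.rank ℝ E) (hE : HasAtMostTwoApexes E) {a b c b' c' : E}
    (h : IsUnitTriangle_s18 a b c) (h' : IsUnitTriangle_s18 a b' c') {m : E × E → ℝ} (hm : Continuous m)
    {t : ℝ} (hle : m (b, c) ≤ t) (hge : t ≤ m (b, a + b - c)) (hopposite : t ≤ m (b', c'))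
    (hopposite_flip : t ≤ m (b', a + b' - c')) :
    ∃ p, IsUnitTriangle_s18 a p.1 p.2 ∧ m p = t := by
  have : ProperSpace E := FiniteDimensional.proper ℝ E
  let flip (p : E × E) : E × E := (p.1, a + p.1 - p.2)
  -- Symmetric in the two triangles on the side `a p.1`, hence a function on the unit sphere at `a`.
  let g (p : E × E) : ℝ := (m p - t) * (m (flip p) - t)
  have hfib (p : E × E) (hp : IsUnitTriangle_s18 a p.1 p.2) (q : E × E)
      (hq : IsUnitTriangle_s18 a q.1 q.2) (hpq : p.1 = q.1) : g p = g q := by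
    have hq' : IsUnitTriangle_s18 a p.1 q.2 := by rwa [hpq]
    have hq_eq : q = p ∨ q = flip p :=
      (hp.eq_or_eq_of_hasAtMostTwoApexes hE hq').imp (Prod.ext hpq.symm) (Prod.ext hpq.symm)
    rcases hq_eq with rfl | rfl
    · rfl
    · have hflip_flip : flip (flip p) = p := Prod.ext rfl (sub_sub_cancel _ _)
      simp only [g, hflip_flip, mul_comm]
  obtain ⟨p, hp, hzero⟩ := exists_eq_of_isCompact_of_constant_on_fibers
    (IsUnitTriangle_s18.isCompact_setOf a) continuous_fst.continuousOn
    (by rw [image_fst_setOf_isUnitTriangle hrank]; exact isPreconnected_sphere hrank a 1)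
    (by fun_prop) hfib h h'
    (mul_nonpos_of_nonpos_of_nonneg (sub_nonpos.2 hle) (sub_nonneg.2 hge))
    (mul_nonneg (sub_nonneg.2 hopposite) (sub_nonneg.2 hopposite_flip))
  rcases mul_eq_zero.1 hzero with hp_eq | hflip_eq
  · exact ⟨p, hp, sub_eq_zero.1 hp_eq⟩
  · exact ⟨flip p, hp.reflect_apex, sub_eq_zero.1 hflip_eq⟩

theorem IsUnitTriangle_s18.exists_rotation [FiniteDimensional ℝ E] (hrank : 1 < Module.rank ℝ E)
    (hE : HasAtMostTwoApexes E) {a b c : E} (h : IsUnitTriangle_s18 a b c) :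
    ∃ b' c', IsUnitTriangle_s18 a b' c' ∧ ‖(b' + c' - a) - (b + c - a)‖ = 1 := by
  let move (p : E × E) : ℝ := ‖(p.1 + p.2 - a) - (b + c - a)‖
  have hstart : move (b, c) = 0 := by simp [move]
  have hflip : 1 < move (b, a + b - c) := calc
    1 < ‖a + b - c - c‖ := h.rotate.rotate.one_lt_norm_far_vertex hE
    _ = move (b, a + b - c) := congrArg norm (by module)
  have hopposite : 1 ≤ move (a + a - b, a + a - c) := calc
    1 ≤ 2 * ‖b + c - a - a‖ := by linarith [h.one_lt_norm_far_vertex hE]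
    _ = ‖(-2 : ℝ) • (b + c - a - a)‖ := by rw [norm_smul, norm_neg, Real.norm_two]
    _ = move (a + a - b, a + a - c) := congrArg norm (by module)
  have hopposite_flip : 1 ≤ move (a + a - b, a + (a + a - b) - (a + a - c)) := calc
    1 ≤ 3 * ‖a - b‖ := by rw [h.norm_sub₁₂]; norm_num
    _ = ‖(3 : ℝ) • (a - b)‖ := by rw [norm_smul, Real.norm_ofNat]
    _ = move (a + a - b, a + (a + a - b) - (a + a - c)) := congrArg norm (by module)
  obtain ⟨p, hp, hmove⟩ := h.exists_eq_of_le_of_ge hrank hE h.pointReflection (m := move)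
    (by fun_prop) (hstart.trans_le zero_le_one) hflip.le hopposite hopposite_flip
  exact ⟨p.1, p.2, hp, hmove⟩

end NormedSpace

namespace PreservesDist

variable {E F : Type*} [NormedAddCommGroup E] [NormedAddCommGroup F] [NormedSpace ℝ F] {f : E → F}

theorem map_far_vertex_eq_or_eq (hF : HasAtMostTwoApexes F) (hf : PreservesDist f 1) {a b c : E}
    (h : IsUnitTriangle_s18 a b c) : f (b + c - a) = f a ∨ f (b + c - a) = f b + f c - f a :=
  (h.rotate.map hf).eq_or_eq_of_hasAtMostTwoApexes hF (h.rotate.reflect_apex.map hf)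

variable [NormedSpace ℝ E] [FiniteDimensional ℝ E]

theorem map_far_vertex (hrank : 1 < Module.rank ℝ E)
    (hE : HasAtMostTwoApexes E) (hF : HasAtMostTwoApexes F) (hf : PreservesDist f 1) {a b c : E}
    (h : IsUnitTriangle_s18 a b c) : f (b + c - a) = f b + f c - f a := by
  refine (hf.map_far_vertex_eq_or_eq hF h).resolve_left fun hcollapse ↦ ?_
  obtain ⟨b', c', h', hmove⟩ := h.exists_rotation hrank hE
  have hunit : ‖f (b' + c' - a) - f a‖ = 1 := hcollapse ▸ hf _ _ hmove
  rcases hf.map_far_vertex_eq_or_eq hF h' with heq | heq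
  · rw [heq, sub_self, norm_zero] at hunit
    exact zero_ne_one hunit
  · rw [heq] at hunit
    exact ((h'.map hf).one_lt_norm_far_vertex hF).ne' hunit

theorem map_add_self_sub (hrank : 1 < Module.rank ℝ E)
    (hE : HasAtMostTwoApexes E) (hF : HasAtMostTwoApexes F) (hf : PreservesDist f 1) {a b : E}
    (hab : ‖a - b‖ = 1) : f (b + b - a) = f b + f b - f a := by
  obtain ⟨c, h⟩ := exists_isUnitTriangle hrank hab
  have hshift : IsUnitTriangle_s18 c b (b + c - a) := by
    simpa only [add_comm c b] using h.rotate.reflect_apex.swap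
  have hmap := hf.map_far_vertex hrank hE hF hshift
  rw [hf.map_far_vertex hrank hE hF h] at hmap
  rw [show b + b - a = b + (b + c - a) - c by abel, hmap]
  abel

theorem map_add_nsmul (hrank : 1 < Module.rank ℝ E)
    (hE : HasAtMostTwoApexes E) (hF : HasAtMostTwoApexes F) (hf : PreservesDist f 1) (a b : E)
    (hab : ‖a - b‖ = 1) (n : ℕ) : f (a + n • (b - a)) = f a + n • (f b - f a) := by
  induction n generalizing a b with
  | zero => simp
  | succ n ih =>
    have hstep : ‖b - (b + b - a)‖ = 1 := by rw [← hab]; congr 1; abel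
    have hmap := ih b (b + b - a) hstep
    rw [hf.map_add_self_sub hrank hE hF hab] at hmap
    rw [succ_nsmul', succ_nsmul',
      show a + (b - a + n • (b - a)) = b + n • (b + b - a - b) by abel_nf, hmap]
    abel_nf

theorem one_div_natCast (hrank : 1 < Module.rank ℝ E)
    (hE : HasAtMostTwoApexes E) (hF : HasAtMostTwoApexes F) (hf : PreservesDist f 1) {n : ℕ}
    (hn : n ≠ 0) : PreservesDist f (1 / n) := by
  intro x y hxy
  have hn' : (n : ℝ) ≠ 0 := Nat.cast_ne_zero.2 hn
  have hle : ‖x - y‖ ≤ 2 * 1 := by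
    rw [hxy]
    linarith [one_div (n : ℝ), Nat.cast_inv_le_one (α := ℝ) n]
  obtain ⟨c, hxc, hyc⟩ := exists_norm_sub_eq_of_norm_sub_le hrank hle
  have hends : ‖(c + n • (x - c)) - (c + n • (y - c))‖ = 1 := by
    rw [add_sub_add_left_eq_sub, ← nsmul_sub, sub_sub_sub_cancel_right, RCLike.norm_nsmul ℝ, hxy,
      nsmul_eq_mul, mul_one_div_cancel hn']
  have hmap := hf _ _ hends
  rw [hf.map_add_nsmul hrank hE hF c x (by rwa [norm_sub_rev]),
    hf.map_add_nsmul hrank hE hF c y (by rwa [norm_sub_rev]), add_sub_add_left_eq_sub,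
    ← nsmul_sub, sub_sub_sub_cancel_right, RCLike.norm_nsmul ℝ, nsmul_eq_mul] at hmap
  exact eq_one_div_of_mul_eq_one_right hmap

end PreservesDist

theorem preserves_fractions_general {E F : Type*} [NormedAddCommGroup E] [NormedSpace ℝ E]
    [FiniteDimensional ℝ E] [NormedAddCommGroup F] [NormedSpace ℝ F] (hrank : 1 < Module.rank ℝ E)
    (hE : HasAtMostTwoApexes E) (hF : HasAtMostTwoApexes F) {d : ℝ} (hd : 0 < d) {f : E → F}
    (hf : PreservesDist f d) {n : ℕ} (hn : n ≠ 0) : PreservesDist f (d / n) := by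
  have hunit : PreservesDist (fun x ↦ d⁻¹ • f (d • x)) 1 :=
    (preservesDist_conj_smul_iff hd).2 (by rwa [mul_one])
  simpa only [mul_one_div] using
    (preservesDist_conj_smul_iff hd).1 (hunit.one_div_natCast hrank hE hF hn)

namespace IsNorm

variable {N : ℝ × ℝ → ℝ}

theorem map_zero (hN : IsNorm N) : N 0 = 0 := by
  simpa using hN.smul_eq 0 0

theorem nonneg (hN : IsNorm N) (x : ℝ × ℝ) : 0 ≤ N x := by
  have hneg : N (-x) = N x := by simpa using hN.smul_eq (-1) x
  have htriangle := hN.add_le x (-x)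
  rw [add_neg_cancel, hneg, hN.map_zero] at htriangle
  linarith

end IsNorm

/-- The plane `ℝ²` with the norm `N`, as a type of its own because `ℝ × ℝ` already carries the
supremum norm. -/
def NormedPlane {N : ℝ × ℝ → ℝ} (_hN : IsNorm N) : Type := ℝ × ℝ

namespace NormedPlane

variable {N : ℝ × ℝ → ℝ} (hN : IsNorm N)

instance : AddCommGroup (NormedPlane hN) := inferInstanceAs (AddCommGroup (ℝ × ℝ))

instance : Module ℝ (NormedPlane hN) := inferInstanceAs (Module ℝ (ℝ × ℝ))

instance : FiniteDimensional ℝ (NormedPlane hN) := inferInstanceAs (FiniteDimensional ℝ (ℝ × ℝ))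

instance : Norm (NormedPlane hN) := ⟨N⟩

theorem core : NormedSpace.Core ℝ (NormedPlane hN) where
  norm_nonneg x := hN.nonneg x
  norm_smul c x := hN.smul_eq c x
  norm_triangle x y := hN.add_le x y
  norm_eq_zero_iff x := ⟨hN.eq_zero_of x, by rintro rfl; exact hN.map_zero⟩

noncomputable instance : NormedAddCommGroup (NormedPlane hN) := .ofCore (core hN)

noncomputable instance : NormedSpace ℝ (NormedPlane hN) := .ofCore (core hN)

theorem one_lt_rank : 1 < Module.rank ℝ (NormedPlane hN) := by
  have hrank : Module.rank ℝ (NormedPlane hN) = Module.rank ℝ (ℝ × ℝ) := rfl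
  rw [hrank, rank_prod', Module.rank_self, one_add_one_eq_two]
  exact Cardinal.one_lt_two

theorem hasAtMostTwoApexes (hU : IsURTC N) : HasAtMostTwoApexes (NormedPlane hN) :=
  fun a b hab ↦ (hU a b hab).le

end NormedPlane

/-- For a URTC-norm, a map preserving distance `d` preserves distance `d / n` for
every positive integer `n`. -/
theorem preserves_fractions (N : ℝ × ℝ → ℝ) (hN : IsNorm N) (hU : IsURTC N)
    (d : ℝ) (hd : 0 < d) (φ : ℝ × ℝ → ℝ × ℝ)
    (hφ : ∀ x y : ℝ × ℝ, N (x - y) = d → N (φ x - φ y) = d) :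
    ∀ n : ℕ, 0 < n →
      ∀ x y : ℝ × ℝ, N (x - y) = d / n → N (φ x - φ y) = d / n :=
  have hplane := NormedPlane.hasAtMostTwoApexes hN hU
  fun _ hn ↦ preserves_fractions_general (E := NormedPlane hN) (F := NormedPlane hN)
    (NormedPlane.one_lt_rank hN) hplane hplane hd hφ hn.ne'
end
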